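/- Let S be any 2^n-periodic binary sequence and let k be a positive integer with k ≤ 2^n (note that L_k(S) < 2^n since k ≥ 1). Set Z = 2^{⌈log_2(2^n - L_k(S))⌉}. Then there exists an integer k' ≤ k with k' ≤ Z such that L_k(S) = L_{k'}(S) = L_{k';Z}(S). -/

import Mathlib

/-- Generating polynomial `S^N(x) = s_0 + s_1 x + ... + s_{N-1} x^{N-1}` of one period
of an `N`-periodic binary sequence. -/
noncomputable def genPoly {N : ℕ} (S : Fin N → ZMod 2) : Polynomial (ZMod 2) :=
  ∑ i : Fin N, Polynomial.C (S i) * Polynomial.X ^ (i : ℕ)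

/-- Linear complexity `L(S) = N - deg (gcd (1 - x^N, S^N(x)))`. -/
noncomputable def linComp {N : ℕ} (S : Fin N → ZMod 2) : ℕ :=
  N - (EuclideanDomain.gcd (1 - Polynomial.X ^ N) (genPoly S)).natDegree

/-- Hamming weight of one period of an `N`-periodic binary sequence. -/
def wt {N : ℕ} (T : Fin N → ZMod 2) : ℕ :=
  (Finset.univ.filter (fun i => T i ≠ 0)).card

/-- `k`-error linear complexity `L_{N,k}(S)`. -/
noncomputable def errLC {N : ℕ} (S : Fin N → ZMod 2) (k : ℕ) : ℕ :=
  sInf {c | ∃ T : Fin N → ZMod 2, wt T ≤ k ∧ linComp (S + T) = c}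

/-- `k`-error linear complexity with a zone of length `Z`: `L_{N,k;Z}(S)`. -/
noncomputable def errLCZone {N : ℕ} (S : Fin N → ZMod 2) (k Z : ℕ) : ℕ :=
  sInf {c | ∃ T : Fin N → ZMod 2, wt T ≤ k ∧ (∀ i : Fin N, Z ≤ (i : ℕ) → T i = 0) ∧
    linComp (S + T) = c}

/-- `E_1(j)`: the sequence whose only nonzero term in one period is a `1` at position `j`. -/
def E1 {N : ℕ} (j : Fin N) : Fin N → ZMod 2 :=
  fun i => if i = j then 1 else 0

/-!
Reducing positions modulo `Z` folds an error sequence `T` into the zone `[0, Z)` without increasing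
its weight, and changes its generating polynomial by a multiple of `1 - X ^ Z`. So folding does not
increase the complexity of `S + T` as soon as `g = gcd (1 - X ^ N, (S + T)(X))` divides `1 - X ^ Z`.
For `N = 2 ^ n` we have `1 - X ^ N = (1 - X) ^ N`, hence `g` is a power of `1 - X`, and it divides
`1 - X ^ Z = (1 - X) ^ Z` for every power of two `Z ≥ deg g = N - L(S + T)`. Apply this to an error
sequence `T` attaining `L_k(S)`, and take for `k'` the weight of the folded sequence.
-/

open Polynomial

section OneSubXPow

variable {R : Type*} [Ring R] [Nontrivial R]

lemma natDegree_one_sub_X_pow (N : ℕ) : (1 - X ^ N : R[X]).natDegree = N := by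
  rw [natDegree_sub, ← C_1, natDegree_X_pow_sub_C]

lemma one_sub_X_pow_ne_zero {N : ℕ} (hN : N ≠ 0) : (1 - X ^ N : R[X]) ≠ 0 :=
  ne_zero_of_natDegree_gt ((natDegree_one_sub_X_pow (R := R) N).symm ▸ Nat.pos_of_ne_zero hN)

end OneSubXPow

section ExpChar

variable {R : Type*} [CommRing R] (p : ℕ) [ExpChar R p]

lemma one_sub_X_pow_expChar_pow (m : ℕ) : (1 - X ^ p ^ m : R[X]) = (1 - X) ^ p ^ m := by
  rw [sub_pow_expChar_pow, one_pow]

lemma dvd_one_sub_X_pow_expChar_pow [IsDomain R] {n m : ℕ} {g : R[X]}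
    (hg : g ∣ 1 - X ^ p ^ n) (hdeg : g.natDegree ≤ p ^ m) : g ∣ 1 - X ^ p ^ m := by
  have one_sub_X_eq : (1 - X : R[X]) = -(X - C 1) := by rw [C_1, neg_sub]
  have prime_one_sub_X : Prime (1 - X : R[X]) := one_sub_X_eq ▸ (prime_X_sub_C 1).neg
  rw [one_sub_X_pow_expChar_pow] at hg ⊢
  obtain ⟨d, -, hd⟩ := (dvd_prime_pow prime_one_sub_X _).1 hg
  have natDegree_g : g.natDegree = d := by
    rw [natDegree_eq_of_degree_eq (degree_eq_degree_of_associated hd), natDegree_pow,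
      one_sub_X_eq, natDegree_neg, natDegree_X_sub_C, mul_one]
  exact hd.dvd.trans (pow_dvd_pow _ (natDegree_g ▸ hdeg))

end ExpChar

lemma one_sub_X_pow_dvd_X_pow_mod_sub_X_pow {R : Type*} [CommRing R] (Z j : ℕ) :
    (1 - X ^ Z : R[X]) ∣ X ^ (j % Z) - X ^ j := by
  have factor : (X ^ (j % Z) - X ^ j : R[X]) = X ^ (j % Z) * (1 - (X ^ Z) ^ (j / Z)) := by
    rw [mul_sub, mul_one, ← pow_mul, ← pow_add, Nat.mod_add_div]
  rw [factor]
  exact (one_sub_dvd_one_sub_pow _ _).mul_left _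

section FoldMod

variable {N : ℕ}

/-- The sequence obtained from `T` by moving each term from position `j` to position `j % Z` and
adding up the terms that meet there. It stays indexed by `Fin N`, so that it is again one period of
an `N`-periodic sequence. -/
def foldMod {M : Type*} [AddCommMonoid M] (Z : ℕ) (T : Fin N → M) : Fin N → M :=
  fun i => ∑ j : Fin N with j.val % Z = i, T j

lemma exists_ne_zero_of_foldMod_ne_zero {M : Type*} [AddCommMonoid M] {Z : ℕ} {T : Fin N → M}
    {i : Fin N} (h : foldMod Z T i ≠ 0) : ∃ j : Fin N, (j : ℕ) % Z = i ∧ T j ≠ 0 := by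
  obtain ⟨j, hj, hTj⟩ := Finset.exists_ne_zero_of_sum_ne_zero h
  exact ⟨j, (Finset.mem_filter.1 hj).2, hTj⟩

lemma foldMod_eq_zero_of_le {M : Type*} [AddCommMonoid M] {Z : ℕ} (hZ : 0 < Z) (T : Fin N → M)
    {i : Fin N} (hi : Z ≤ (i : ℕ)) : foldMod Z T i = 0 := by
  by_contra h
  obtain ⟨j, hji, -⟩ := exists_ne_zero_of_foldMod_ne_zero h
  exact hi.not_gt (hji ▸ Nat.mod_lt j hZ)

lemma wt_foldMod_le (Z : ℕ) (T : Fin N → ZMod 2) : wt (foldMod Z T) ≤ wt T := by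
  refine Finset.card_le_card_of_surjOn
    (fun j : Fin N => ⟨(j : ℕ) % Z, (Nat.mod_le _ _).trans_lt j.isLt⟩) fun i hi => ?_
  obtain ⟨j, hji, hTj⟩ := exists_ne_zero_of_foldMod_ne_zero (Finset.mem_filter.1 hi).2
  exact ⟨j, by simpa using hTj, Fin.ext hji⟩

lemma wt_le_of_forall_eq_zero {Z : ℕ} {T : Fin N → ZMod 2}
    (hT : ∀ i : Fin N, Z ≤ (i : ℕ) → T i = 0) : wt T ≤ Z := by
  rw [← Finset.card_range Z]
  refine Finset.card_le_card_of_injOn Fin.val (fun i hi => ?_) Fin.val_injective.injOn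
  exact Finset.mem_coe.2 <| Finset.mem_range.2 <|
    not_le.1 fun h => (Finset.mem_filter.1 hi).2 (hT i h)

lemma genPoly_foldMod (Z : ℕ) (T : Fin N → ZMod 2) :
    genPoly (foldMod Z T) = ∑ j : Fin N, C (T j) * X ^ ((j : ℕ) % Z) := by
  simp only [genPoly, foldMod, map_sum, Finset.sum_mul, Finset.sum_filter]
  rw [Finset.sum_comm]
  refine Finset.sum_congr rfl fun j _ => ?_
  rw [Finset.sum_eq_single (⟨(j : ℕ) % Z, (Nat.mod_le _ _).trans_lt j.isLt⟩ : Fin N)]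
  · rw [if_pos rfl]
  · intro i _ hi
    rw [if_neg fun h : (j : ℕ) % Z = i => hi (Fin.ext h.symm), C_0, zero_mul]
  · exact fun h => absurd (Finset.mem_univ _) h

lemma one_sub_X_pow_dvd_genPoly_foldMod_sub (Z : ℕ) (T : Fin N → ZMod 2) :
    1 - X ^ Z ∣ genPoly (foldMod Z T) - genPoly T := by
  rw [genPoly_foldMod, genPoly, ← Finset.sum_sub_distrib]
  refine Finset.dvd_sum fun j _ => ?_
  rw [← mul_sub]
  exact (one_sub_X_pow_dvd_X_pow_mod_sub_X_pow Z j).mul_left _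

end FoldMod

section LinComp

variable {N : ℕ}

lemma genPoly_add (S T : Fin N → ZMod 2) : genPoly (S + T) = genPoly S + genPoly T := by
  simp only [genPoly, Pi.add_apply, map_add, add_mul, Finset.sum_add_distrib]

/-- The polynomial `gcd (1 - x^N, S^N(x))`, whose degree is the amount by which the linear
complexity of `S` falls short of the period `N`. -/
noncomputable def periodGcd (S : Fin N → ZMod 2) : (ZMod 2)[X] :=
  EuclideanDomain.gcd (1 - X ^ N) (genPoly S)

lemma periodGcd_dvd_one_sub_X_pow (S : Fin N → ZMod 2) : periodGcd S ∣ 1 - X ^ N :=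
  EuclideanDomain.gcd_dvd_left _ _

lemma periodGcd_dvd_genPoly (S : Fin N → ZMod 2) : periodGcd S ∣ genPoly S :=
  EuclideanDomain.gcd_dvd_right _ _

lemma natDegree_periodGcd_le (S : Fin N → ZMod 2) : (periodGcd S).natDegree ≤ N := by
  rcases eq_or_ne N 0 with rfl | hN
  · simp [periodGcd, genPoly]
  · exact (natDegree_le_of_dvd (periodGcd_dvd_one_sub_X_pow S)
      (one_sub_X_pow_ne_zero hN)).trans_eq (natDegree_one_sub_X_pow N)

lemma natDegree_periodGcd (S : Fin N → ZMod 2) : (periodGcd S).natDegree = N - linComp S :=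
  (Nat.sub_sub_self (natDegree_periodGcd_le S)).symm

lemma linComp_le_of_periodGcd_dvd {S S' : Fin N → ZMod 2} (h : periodGcd S ∣ genPoly S') :
    linComp S' ≤ linComp S := by
  rcases eq_or_ne N 0 with rfl | hN
  · exact (Nat.sub_le _ _).trans (Nat.zero_le _)
  have hdvd : periodGcd S ∣ periodGcd S' :=
    EuclideanDomain.dvd_gcd (periodGcd_dvd_one_sub_X_pow S) h
  have hne : periodGcd S' ≠ 0 :=
    ne_zero_of_dvd_ne_zero (one_sub_X_pow_ne_zero hN) (periodGcd_dvd_one_sub_X_pow S')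
  exact Nat.sub_le_sub_left (natDegree_le_of_dvd hdvd hne) N

lemma linComp_add_foldMod_le {Z : ℕ} {S T : Fin N → ZMod 2}
    (h : periodGcd (S + T) ∣ 1 - X ^ Z) : linComp (S + foldMod Z T) ≤ linComp (S + T) := by
  refine linComp_le_of_periodGcd_dvd ?_
  have genPoly_eq : genPoly (S + foldMod Z T)
      = genPoly (S + T) + (genPoly (foldMod Z T) - genPoly T) := by
    rw [genPoly_add, genPoly_add]
    ring
  rw [genPoly_eq]
  exact dvd_add (periodGcd_dvd_genPoly _) (h.trans (one_sub_X_pow_dvd_genPoly_foldMod_sub Z T))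

end LinComp

section ErrLC

variable {N : ℕ} (S : Fin N → ZMod 2)

lemma exists_linComp_add_eq_errLC (k : ℕ) : ∃ T, wt T ≤ k ∧ linComp (S + T) = errLC S k :=
  Nat.sInf_mem (s := {c | ∃ T, wt T ≤ k ∧ linComp (S + T) = c}) ⟨_, 0, by simp [wt], rfl⟩

lemma exists_linComp_add_eq_errLCZone (k Z : ℕ) :
    ∃ T : Fin N → ZMod 2, wt T ≤ k ∧ (∀ i : Fin N, Z ≤ (i : ℕ) → T i = 0) ∧
      linComp (S + T) = errLCZone S k Z :=
  Nat.sInf_mem (s := {c | ∃ T : Fin N → ZMod 2, wt T ≤ k ∧ (∀ i : Fin N, Z ≤ (i : ℕ) → T i = 0) ∧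
    linComp (S + T) = c}) ⟨_, 0, by simp [wt], fun _ _ => rfl, rfl⟩

variable {S}

lemma errLC_le_linComp_add {k : ℕ} {T : Fin N → ZMod 2} (hT : wt T ≤ k) :
    errLC S k ≤ linComp (S + T) :=
  Nat.sInf_le ⟨T, hT, rfl⟩

lemma errLCZone_le_linComp_add {k Z : ℕ} {T : Fin N → ZMod 2} (hT : wt T ≤ k)
    (hzone : ∀ i : Fin N, Z ≤ (i : ℕ) → T i = 0) : errLCZone S k Z ≤ linComp (S + T) :=
  Nat.sInf_le ⟨T, hT, hzone, rfl⟩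

variable (S)

lemma antitone_errLC : Antitone (errLC S) := by
  intro k' k hk
  obtain ⟨T, hT, hTk'⟩ := exists_linComp_add_eq_errLC S k'
  exact hTk' ▸ errLC_le_linComp_add (hT.trans hk)

lemma errLC_le_errLCZone (k Z : ℕ) : errLC S k ≤ errLCZone S k Z := by
  obtain ⟨T, hT, -, hTZ⟩ := exists_linComp_add_eq_errLCZone S k Z
  exact hTZ ▸ errLC_le_linComp_add hT

end ErrLC

/-- For any `2^n`-periodic binary sequence and `1 ≤ k ≤ 2^n`, with
`Z = 2^{⌈log₂(2^n - L_k(S))⌉}`, there exists `k' ≤ k` with `k' ≤ Z` and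
`L_k(S) = L_{k'}(S) = L_{k';Z}(S)`. -/
theorem stmt7 (n k : ℕ) (hk1 : 1 ≤ k) (hk : k ≤ 2^n) (S : Fin (2^n) → ZMod 2) :
    ∃ k' ≤ k, k' ≤ 2^(Nat.clog 2 (2^n - errLC S k)) ∧
      errLC S k = errLC S k' ∧
      errLC S k' = errLCZone S k' (2^(Nat.clog 2 (2^n - errLC S k))) := by
  set Z := 2 ^ Nat.clog 2 (2 ^ n - errLC S k)
  have hZ : 0 < Z := by positivity
  obtain ⟨T, hT, hTk⟩ := exists_linComp_add_eq_errLC S k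
  have periodGcd_dvd : periodGcd (S + T) ∣ 1 - X ^ Z := by
    refine dvd_one_sub_X_pow_expChar_pow 2 (periodGcd_dvd_one_sub_X_pow (S + T)) ?_
    rw [natDegree_periodGcd, hTk]
    exact Nat.le_pow_clog one_lt_two _
  have hzone : ∀ i : Fin (2 ^ n), Z ≤ (i : ℕ) → foldMod Z T i = 0 :=
    fun _ => foldMod_eq_zero_of_le hZ T
  have hwt : wt (foldMod Z T) ≤ k := (wt_foldMod_le Z T).trans hT
  have errLC_le : errLC S k ≤ errLC S (wt (foldMod Z T)) := antitone_errLC S hwt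
  have le_errLCZone := errLC_le_errLCZone S (wt (foldMod Z T)) Z
  have errLCZone_le : errLCZone S (wt (foldMod Z T)) Z ≤ errLC S k := calc
    _ ≤ linComp (S + foldMod Z T) := errLCZone_le_linComp_add le_rfl hzone
    _ ≤ linComp (S + T) := linComp_add_foldMod_le periodGcd_dvd
    _ = errLC S k := hTk
  exact ⟨_, hwt, wt_le_of_forall_eq_zero hzone,
    errLC_le.antisymm (le_errLCZone.trans errLCZone_le),
    le_errLCZone.antisymm (errLCZone_le.trans errLC_le)⟩
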